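/- arXiv:2306.05154 — 12 statements merged into one kernel-verified Lean document; each statement's English description precedes it below -/
import Mathlib

section
/- Let f be a signomial on the positive orthant ℝⁿ_{>0} and let v ∈ ℝⁿ. If the restriction of f to the face N(f)_v of its Newton polytope takes a negative value at some point x ∈ ℝⁿ_{>0}, i.e. f_{|N(f)_v}(x) < 0, then there exists T ∈ ℝ_{>0} such that for all t > T one has f(t^v ∗ x) < 0, where t^v ∗ x = (t^{v₁}x₁, …, t^{v_n}x_n). -/
/-- A signomial on the positive orthant `ℝⁿ_{>0}`: a function
`x ↦ ∑_{μ ∈ supp} coeff μ * x ^ μ` with finite support and nonzero coefficients. -/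
structure Signomial (n : ℕ) where
  supp : Finset (Fin n → ℝ)
  coeff : (Fin n → ℝ) → ℝ
  coeff_ne_zero : ∀ μ ∈ supp, coeff μ ≠ 0
  coeff_eq_zero : ∀ μ ∉ supp, coeff μ = 0

namespace Signomial

variable {n : ℕ}

/-- The monomial `x^μ = ∏ i, x i ^ μ i` (real exponents). -/
noncomputable def mono (x μ : Fin n → ℝ) : ℝ := ∏ i, x i ^ μ i

/-- Evaluation of a signomial. -/
noncomputable def eval (f : Signomial n) (x : Fin n → ℝ) : ℝ :=
  ∑ μ ∈ f.supp, f.coeff μ * mono x μ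

open Classical in
/-- Evaluation of the restriction `f_{|S}` of `f` to a set `S ⊆ ℝⁿ`. -/
noncomputable def evalOn (f : Signomial n) (S : Set (Fin n → ℝ)) (x : Fin n → ℝ) : ℝ :=
  ∑ μ ∈ f.supp, if μ ∈ S then f.coeff μ * mono x μ else 0

/-- The Newton polytope `N(f) = conv(σ(f))`. -/
def newton (f : Signomial n) : Set (Fin n → ℝ) :=
  convexHull ℝ (f.supp : Set (Fin n → ℝ))

/-- Euclidean scalar product on `Fin n → ℝ`. -/
noncomputable def dot (v μ : Fin n → ℝ) : ℝ := ∑ i, v i * μ i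

/-- The face `N(f)_v` of the Newton polytope cut out by `v`. -/
def faceAt (f : Signomial n) (v : Fin n → ℝ) : Set (Fin n → ℝ) :=
  {μ ∈ f.newton | ∀ ν ∈ f.newton, dot v ν ≤ dot v μ}

/-- `F` is a (nonempty, exposed) face of the Newton polytope of `f`. -/
def IsFace (f : Signomial n) (F : Set (Fin n → ℝ)) : Prop :=
  F.Nonempty ∧ ∃ v, F = f.faceAt v

/-- The (outer) normal cone of a face `F` of `N(f)`. -/
def normalCone (f : Signomial n) (F : Set (Fin n → ℝ)) : Set (Fin n → ℝ) :=
  {v | F ⊆ f.faceAt v}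

/-- The negative normal cone `N_f^- = {v | N(f)_v ∩ σ₋(f) ≠ ∅}`. -/
def negCone (f : Signomial n) : Set (Fin n → ℝ) :=
  {v | ∃ μ ∈ f.supp, f.coeff μ < 0 ∧ μ ∈ f.faceAt v}

/-- The positive orthant `ℝⁿ_{>0}`. -/
def posOrth (n : ℕ) : Set (Fin n → ℝ) := {x | ∀ i, 0 < x i}

/-- `S(f) = f⁻¹(ℝ_{<0})` (inside the positive orthant). -/
def negSet₁ (f : Signomial n) : Set (Fin n → ℝ) :=
  {x ∈ posOrth n | f.eval x < 0}

/-- `S(f₁, …, f_k) = ⋂ᵢ fᵢ⁻¹(ℝ_{<0})` (inside the positive orthant). -/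
def negSet {k : ℕ} (f : Fin k → Signomial n) : Set (Fin n → ℝ) :=
  {x ∈ posOrth n | ∀ i, (f i).eval x < 0}

/-- The actual negative normal cone `Σ(f)` of a single signomial. -/
def actualNegCone₁ (f : Signomial n) : Set (Fin n → ℝ) :=
  {v | ∃ x ∈ posOrth n, f.evalOn (f.faceAt v) x < 0}

/-- The actual negative normal cone `Σ(f₁, …, f_k)`. -/
def actualNegCone {k : ℕ} (f : Fin k → Signomial n) : Set (Fin n → ℝ) :=
  {v | ∃ x ∈ posOrth n, ∀ i, (f i).evalOn ((f i).faceAt v) x < 0}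

/-- The real tropicalization (logarithmic limit set) of `S ⊆ ℝⁿ_{>0}`:
`w ∈ Trop(S)` iff there are sequences `x(m) ∈ S`, `t(m) ∈ (1,∞)` with `t(m) → ∞` and
`Log_{t(m)}(x(m)) → w`. -/
def trop (S : Set (Fin n → ℝ)) : Set (Fin n → ℝ) :=
  {w | ∃ (x : ℕ → Fin n → ℝ) (t : ℕ → ℝ),
    (∀ m, x m ∈ S) ∧ (∀ m, 1 < t m) ∧
    Filter.Tendsto t Filter.atTop Filter.atTop ∧
    Filter.Tendsto (fun m i => Real.log (x m i) / Real.log (t m))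
      Filter.atTop (nhds w)}

open Classical in
/-- The support of the restriction `f_{|F}`, i.e. `σ(f) ∩ F`. -/
noncomputable def restSupp (f : Signomial n) (F : Set (Fin n → ℝ)) : Finset (Fin n → ℝ) :=
  f.supp.filter (fun μ => μ ∈ F)

/-- Evaluation of the signomial with coefficient vector `c ∈ ℝ^A`. -/
noncomputable def evalVec (A : Finset (Fin n → ℝ)) (c : A → ℝ) (x : Fin n → ℝ) : ℝ :=
  ∑ μ : A, c μ * mono x (μ : Fin n → ℝ)

/-- The nonnegativity cone `P⁺_A ⊆ ℝ^A`. -/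
def nonnegConeSet (A : Finset (Fin n → ℝ)) : Set (A → ℝ) :=
  {c | ∀ x ∈ posOrth n, 0 ≤ evalVec A c x}

/-- The coefficient vector of `f` viewed in `ℝ^A`. -/
def coeffVec (f : Signomial n) (A : Finset (Fin n → ℝ)) : A → ℝ :=
  fun μ => f.coeff μ

/-- The non-boundary condition (NB): for every face `F` of `N(f)`, if `f_{|F}` is
nonnegative on the positive orthant then it lies in the interior of the nonnegativity
cone `P⁺_{σ(f) ∩ F}`. -/
def NBcond (f : Signomial n) : Prop :=
  ∀ F : Set (Fin n → ℝ), f.IsFace F →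
    coeffVec f (f.restSupp F) ∈ nonnegConeSet (f.restSupp F) →
    coeffVec f (f.restSupp F) ∈ interior (nonnegConeSet (f.restSupp F))

end Signomial

open Signomial in
/-- If `f_{|N(f)_v}(x) < 0` for some `x ∈ ℝⁿ_{>0}`, then there is `T > 0`
such that `f(t^v ∗ x) < 0` for all `t > T`. -/
theorem pushing_to_face {n : ℕ} (f : Signomial n) (v x : Fin n → ℝ)
    (hx : x ∈ posOrth n) (h : f.evalOn (f.faceAt v) x < 0) :
    ∃ T : ℝ, 0 < T ∧ ∀ t : ℝ, T < t → f.eval (fun i => t ^ (v i) * x i) < 0 := by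
  classical
  obtain ⟨μ₀, hμ₀⟩ : ∃ μ₀, μ₀ ∈ f.faceAt v := by
    by_contra hne
    push Not at hne
    simp [evalOn, hne] at h
  have hmono : ∀ t : ℝ, 0 < t → ∀ μ : Fin n → ℝ,
      mono (fun i => t ^ (v i) * x i) μ = t ^ (dot v μ) * mono x μ := by
    intro t ht μ
    unfold mono dot
    rw [Real.rpow_sum_of_pos ht, ← Finset.prod_mul_distrib]
    refine Finset.prod_congr rfl fun i _ => ?_
    rw [Real.mul_rpow (Real.rpow_nonneg ht.le _) (hx i).le, Real.rpow_mul ht.le]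
  have hlim : Filter.Tendsto
      (fun t : ℝ => ∑ μ ∈ f.supp, t ^ (dot v μ - dot v μ₀) * (f.coeff μ * mono x μ))
      Filter.atTop (nhds (f.evalOn (f.faceAt v) x)) := by
    unfold evalOn
    refine tendsto_finsetSum _ fun μ hμ => ?_
    have hN : μ ∈ f.newton := subset_convexHull ℝ _ hμ
    have hle := hμ₀.2 μ hN
    split_ifs with hF
    · have : dot v μ - dot v μ₀ = 0 := by linarith [hF.2 μ₀ hμ₀.1]
      simp [this]
    · have hlt : dot v μ < dot v μ₀ := by
        by_contra hge
        push Not at hge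
        exact hF ⟨hN, fun ν hν => (hμ₀.2 ν hν).trans hge⟩
      have := tendsto_rpow_neg_atTop (y := dot v μ₀ - dot v μ) (by linarith)
      simpa using this.mul_const (f.coeff μ * mono x μ)
  obtain ⟨T, hT⟩ := Filter.eventually_atTop.1 (hlim.eventually_lt_const h)
  refine ⟨max T 1, by positivity, fun t ht => ?_⟩
  have ht0 : 0 < t := by linarith [le_max_right T 1]
  have h1 := hT t (by linarith [le_max_left T 1])
  have h2 : f.eval (fun i => t ^ (v i) * x i) = t ^ (dot v μ₀) *
      ∑ μ ∈ f.supp, t ^ (dot v μ - dot v μ₀) * (f.coeff μ * mono x μ) := by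
    unfold eval
    rw [Finset.mul_sum]
    refine Finset.sum_congr rfl fun μ _ => ?_
    rw [hmono t ht0, ← mul_assoc (t ^ _) (t ^ _), ← Real.rpow_add ht0]
    rw [add_sub_cancel]
    ring
  rw [h2]
  exact mul_neg_of_pos_of_neg (Real.rpow_pos_of_pos ht0 _) h1
end

section
/- Let f₁, …, f_k be signomials on ℝⁿ_{>0}, let C be a cone in the common refinement ⋀_{i=1}^{k} N_{f_i} of their normal fans, and let v be a point of the relative interior of C. If v ∈ Σ(f₁, …, f_k), then C ⊆ Σ(f₁, …, f_k). -/
namespace Signomial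

theorem dot_lineMap {n : ℕ} (v w μ : Fin n → ℝ) (t : ℝ) :
    dot (AffineMap.lineMap v w t) μ = (1 - t) * dot v μ + t * dot w μ := by
  simp only [dot, Finset.mul_sum, ← Finset.sum_add_distrib]
  refine Finset.sum_congr rfl fun i _ => ?_
  simp only [AffineMap.lineMap_apply_module, Pi.add_apply, Pi.smul_apply, smul_eq_mul]
  ring

theorem exists_neg_lineMap {n : ℕ} {C : Set (Fin n → ℝ)} {v w : Fin n → ℝ}
    (hv : v ∈ intrinsicInterior ℝ C) (hw : w ∈ C) :
    ∃ t : ℝ, t < 0 ∧ AffineMap.lineMap v w t ∈ C := by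
  obtain ⟨y, hy, rfl⟩ := mem_intrinsicInterior.1 hv
  let g : ℝ → affineSpan ℝ C := fun t =>
    ⟨AffineMap.lineMap (y : Fin n → ℝ) w t,
      AffineMap.lineMap_mem _ y.2 (subset_affineSpan ℝ C hw)⟩
  have hg : Continuous g := Continuous.subtype_mk AffineMap.lineMap_continuous _
  have h0 : g 0 = y := by
    apply Subtype.ext
    simp [g]
  have hn : ∀ᶠ t in nhds (0 : ℝ), g t ∈ ((↑) ⁻¹' C : Set (affineSpan ℝ C)) := by
    apply hg.continuousAt.eventually
    rw [h0]
    exact mem_interior_iff_mem_nhds.1 hy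
  have hn' := (hn.filter_mono (nhdsWithin_le_nhds (s := Set.Iio 0))).and
    (self_mem_nhdsWithin : Set.Iio (0 : ℝ) ∈ _)
  obtain ⟨t, ht, ht'⟩ := hn'.exists
  exact ⟨t, ht', ht⟩

theorem mono_shift {n : ℕ} (x v μ : Fin n → ℝ) (hx : x ∈ posOrth n) (t : ℝ) :
    mono (fun i => x i * Real.exp (t * v i)) μ = mono x μ * Real.exp (t * dot v μ) := by
  simp only [mono, dot, Finset.mul_sum, Real.exp_sum, ← Finset.prod_mul_distrib]
  refine Finset.prod_congr rfl fun i _ => ?_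
  rw [Real.mul_rpow (hx i).le (Real.exp_pos _).le, ← Real.exp_mul]
  ring_nf

theorem tendsto_evalOn {n : ℕ} (f : Signomial n) (v w x p : Fin n → ℝ) (hx : x ∈ posOrth n)
    (hp : p ∈ f.faceAt v) (hvw : f.faceAt v ⊆ f.faceAt w) :
    Filter.Tendsto (fun t : ℝ => Real.exp (-(t * dot v p)) *
        f.evalOn (f.faceAt w) (fun i => x i * Real.exp (t * v i)))
      Filter.atTop (nhds (f.evalOn (f.faceAt v) x)) := by
  unfold evalOn
  simp only [Finset.mul_sum]
  refine tendsto_finsetSum _ fun μ hμ => ?_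
  have hμN : μ ∈ f.newton := subset_convexHull ℝ _ hμ
  by_cases hw : μ ∈ f.faceAt w
  · simp only [if_pos hw, mono_shift x v μ hx]
    have he : ∀ t : ℝ, Real.exp (-(t * dot v p)) *
        (f.coeff μ * (mono x μ * Real.exp (t * dot v μ))) =
        f.coeff μ * mono x μ * Real.exp (t * (dot v μ - dot v p)) := by
      intro t
      rw [mul_sub, sub_eq_add_neg, Real.exp_add]
      ring
    simp only [he]
    by_cases hv : μ ∈ f.faceAt v
    · have : dot v μ - dot v p = 0 := by
        linarith [hp.2 μ hμN, hv.2 p hp.1]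
      simp [this, hv]
    · have hlt : dot v μ - dot v p < 0 := by
        by_contra! h
        exact hv ⟨hμN, fun ν hν => by linarith [hp.2 ν hν]⟩
      rw [if_neg hv]
      have h1 : Filter.Tendsto (fun t : ℝ => Real.exp (t * (dot v μ - dot v p)))
          Filter.atTop (nhds 0) :=
        Real.tendsto_exp_atBot.comp (Filter.tendsto_id.atTop_mul_const_of_neg hlt)
      simpa using h1.const_mul (f.coeff μ * mono x μ)
  · have hv : μ ∉ f.faceAt v := fun h => hw (hvw h)
    simp [hw, hv]

end Signomial

open Signomial in
/-- If `C` is a cone of the common refinement of the normal fans of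
`f₁, …, f_k` and some `v` in the relative interior of `C` lies in `Σ(f₁, …, f_k)`,
then `C ⊆ Σ(f₁, …, f_k)`. -/
theorem relint_actualNegCone {n k : ℕ} (f : Fin k → Signomial n)
    (C : Set (Fin n → ℝ))
    (hC : ∃ F : Fin k → Set (Fin n → ℝ),
      (∀ i, (f i).IsFace (F i)) ∧ C = ⋂ i, (f i).normalCone (F i))
    (v : Fin n → ℝ) (hv : v ∈ intrinsicInterior ℝ C)
    (hvS : v ∈ actualNegCone f) :
    C ⊆ actualNegCone f := by
  obtain ⟨F, hF, rfl⟩ := hC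
  intro w hw
  obtain ⟨s, hs, hu⟩ := exists_neg_lineMap hv hw
  have hvC := intrinsicInterior_subset hv
  rw [Set.mem_iInter] at hw hu hvC
  obtain ⟨x, hx, hneg⟩ := hvS
  choose p hp using fun i => (hF i).1
  have hsub : ∀ i, (f i).faceAt v ⊆ (f i).faceAt w := by
    intro i μ hμ
    have h1 := hμ.2 _ (hvC i (hp i)).1
    have h2 := (hu i (hp i)).2 μ hμ.1
    have h3 := (hw i (hp i)).2
    rw [dot_lineMap, dot_lineMap] at h2
    have h4 : dot w (p i) ≤ dot w μ := by
      by_contra! h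
      nlinarith
    exact ⟨hμ.1, fun ν hν => (h3 ν hν).trans h4⟩
  have hev : ∀ᶠ t : ℝ in Filter.atTop, ∀ i, Real.exp (-(t * dot v (p i))) *
      (f i).evalOn ((f i).faceAt w) (fun j => x j * Real.exp (t * v j)) < 0 :=
    Filter.eventually_all.2 fun i =>
      (tendsto_evalOn (f i) v w x (p i) hx (hvC i (hp i)) (hsub i)).eventually_lt_const (hneg i)
  obtain ⟨t, ht⟩ := hev.exists
  refine ⟨_, fun j => mul_pos (hx j) (Real.exp_pos (t * v j)), fun i => ?_⟩
  exact (pos_iff_neg_of_mul_neg (ht i)).1 (Real.exp_pos _)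
end

section
/- Let f₁, …, f_k be signomials on ℝⁿ_{>0}. Then the actual negative normal cone Σ(f₁, …, f_k) is a closed subset of ℝⁿ. -/
namespace Signomial

theorem aux_mem_faceAt {n : ℕ} (f : Signomial n) (v μ : Fin n → ℝ) (hμ : μ ∈ f.supp) :
    μ ∈ f.faceAt v ↔ ∀ ν ∈ f.supp, dot v ν ≤ dot v μ := by
  constructor
  · intro h ν hν
    exact h.2 ν (subset_convexHull ℝ _ hν)
  · intro h
    refine ⟨subset_convexHull ℝ _ hμ, ?_⟩
    have hc : Convex ℝ {ν : Fin n → ℝ | dot v ν ≤ dot v μ} := by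
      apply convex_halfSpace_le (f := fun ν => dot v ν)
      constructor
      · intro a b
        simp [dot, mul_add, Finset.sum_add_distrib]
      · intro c a
        simp only [dot, Pi.smul_apply, smul_eq_mul, Finset.mul_sum]
        exact Finset.sum_congr rfl fun i _ => by ring
    intro ν hν
    exact convexHull_min (fun a ha => h a ha) hc hν

theorem aux_mono {n : ℕ} (x w μ : Fin n → ℝ) (hx : x ∈ posOrth n) (t : ℝ) :
    mono (fun j => x j * Real.exp (t * w j)) μ = mono x μ * Real.exp (t * dot w μ) := by
  unfold mono dot
  rw [Finset.mul_sum, Real.exp_sum, ← Finset.prod_mul_distrib]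
  refine Finset.prod_congr rfl fun i _ => ?_
  rw [Real.mul_rpow (hx i).le (Real.exp_pos _).le, ← Real.exp_mul, mul_assoc]

theorem aux_eventually {n : ℕ} (f : Signomial n) (v w x : Fin n → ℝ) (hx : x ∈ posOrth n)
    (hvw : ∀ μ ∈ f.supp, ∀ ν ∈ f.supp, dot v μ < dot v ν → dot w μ < dot w ν)
    (hneg : f.evalOn (f.faceAt w) x < 0) :
    ∀ᶠ t : ℝ in Filter.atTop,
      f.evalOn (f.faceAt v) (fun j => x j * Real.exp (t * w j)) < 0 := by
  classical
  obtain ⟨μ₀, hμ₀, hF⟩ : ∃ μ ∈ f.supp, μ ∈ f.faceAt w := by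
    by_contra! h
    have : f.evalOn (f.faceAt w) x = 0 := by
      unfold evalOn
      exact Finset.sum_eq_zero fun μ hμ => if_neg (h μ hμ)
    linarith
  have hmax := (aux_mem_faceAt f w μ₀ hμ₀).1 hF
  have key : Filter.Tendsto (fun t : ℝ =>
      f.evalOn (f.faceAt v) (fun j => x j * Real.exp (t * w j)) * Real.exp (-(t * dot w μ₀)))
      Filter.atTop (nhds (f.evalOn (f.faceAt w) x)) := by
    unfold evalOn
    simp only [Finset.sum_mul]
    refine tendsto_finsetSum _ fun μ hμ => ?_
    by_cases hw : μ ∈ f.faceAt w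
    · have hv : μ ∈ f.faceAt v := by
        rw [aux_mem_faceAt f _ μ hμ] at hw ⊢
        intro ν hν
        by_contra! hlt
        exact absurd (hvw μ hμ ν hν hlt) (not_lt.2 (hw ν hν))
      have he : dot w μ = dot w μ₀ :=
        le_antisymm (hmax μ hμ) ((aux_mem_faceAt f w μ hμ).1 hw μ₀ hμ₀)
      simp only [if_pos hv, if_pos hw, aux_mono x w μ hx, he]
      refine tendsto_const_nhds.congr fun t => ?_
      rw [mul_assoc, mul_assoc, ← Real.exp_add, add_neg_cancel, Real.exp_zero, mul_one]
    · rw [if_neg hw]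
      by_cases hv : μ ∈ f.faceAt v
      · have hlt : dot w μ < dot w μ₀ := by
          refine lt_of_le_of_ne (hmax μ hμ) fun he => hw ?_
          rw [aux_mem_faceAt f _ μ hμ, he]
          exact hmax
        simp only [if_pos hv, aux_mono x w μ hx]
        have h1 : Filter.Tendsto (fun t : ℝ => Real.exp (t * (dot w μ - dot w μ₀)))
            Filter.atTop (nhds 0) :=
          Real.tendsto_exp_atBot.comp
            (Filter.tendsto_id.atTop_mul_const_of_neg (sub_neg.2 hlt))
        have h2 := h1.const_mul (f.coeff μ * mono x μ)
        rw [mul_zero] at h2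
        refine h2.congr fun t => ?_
        rw [mul_sub, sub_eq_add_neg, Real.exp_add]
        ring
      · simp [if_neg hv]
  filter_upwards [key.eventually (gt_mem_nhds hneg)] with t ht
  by_contra! h
  exact absurd ht (not_lt.2 (mul_nonneg h (Real.exp_pos _).le))

end Signomial

open Signomial in
/-- The actual negative normal cone `Σ(f₁, …, f_k)` is closed. -/
theorem actualNegCone_isClosed {n k : ℕ} (f : Fin k → Signomial n) :
    IsClosed (actualNegCone f) := by
  rw [isClosed_iff_frequently]
  intro v hv
  have hcont : ∀ μ : Fin n → ℝ, Continuous fun w => dot w μ := by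
    intro μ
    unfold dot
    fun_prop
  have hev : ∀ᶠ w in nhds v, ∀ i, ∀ μ ∈ (f i).supp, ∀ ν ∈ (f i).supp,
      dot v μ < dot v ν → dot w μ < dot w ν := by
    refine Filter.eventually_all.2 fun i => ?_
    refine (Filter.eventually_all_finset _).2 fun μ _ => ?_
    refine (Filter.eventually_all_finset _).2 fun ν _ => ?_
    by_cases h : dot v μ < dot v ν
    · filter_upwards [(hcont μ).continuousAt.eventually_lt (hcont ν).continuousAt h] with w hw _
      exact hw
    · exact Filter.Eventually.of_forall fun w h' => absurd h' h
  obtain ⟨w, ⟨x, hx, hneg⟩, hw⟩ := (hv.and_eventually hev).exists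
  have hall : ∀ᶠ t : ℝ in Filter.atTop, ∀ i,
      (f i).evalOn ((f i).faceAt v) (fun j => x j * Real.exp (t * w j)) < 0 :=
    Filter.eventually_all.2 fun i => aux_eventually (f i) v w x hx (hw i) (hneg i)
  obtain ⟨t, ht⟩ := hall.exists
  exact ⟨_, fun j => mul_pos (hx j) (Real.exp_pos _), ht⟩
end

section
/- Let f₁, …, f_k be signomials on ℝⁿ_{>0}. Then the actual negative normal cone is contained in the intersection of the negative normal cones: Σ(f₁, …, f_k) ⊆ ⋂_{i=1}^{k} N_{f_i}^-. In particular, if the restriction of a signomial f to a face F of N(f) takes a negative value on ℝⁿ_{>0}, then F contains a negative exponent vector of f. -/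
theorem Signomial.exists_neg_of_evalOn_neg {n : ℕ} (f : Signomial n) (F : Set (Fin n → ℝ))
    (x : Fin n → ℝ) (hx : x ∈ Signomial.posOrth n) (h : f.evalOn F x < 0) :
    ∃ μ ∈ f.supp, f.coeff μ < 0 ∧ μ ∈ F := by
  by_contra hc
  push Not at hc
  refine absurd h (not_lt.mpr ?_)
  unfold Signomial.evalOn
  refine Finset.sum_nonneg fun μ hμ => ?_
  split_ifs with hF
  · refine mul_nonneg ?_ (Finset.prod_nonneg fun i _ => Real.rpow_nonneg (hx i).le _)
    by_contra hneg
    exact hc μ hμ (not_le.mp hneg) hF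
  · exact le_rfl

open Signomial in
/-- `Σ(f₁, …, f_k) ⊆ ⋂ᵢ N_{fᵢ}^-`. In particular, if the restriction of a
signomial `f` to a face `F` of `N(f)` takes a negative value on `ℝⁿ_{>0}`, then `F`
contains a negative exponent vector of `f`. -/
theorem actualNegCone_subset_negCones :
    (∀ (n k : ℕ) (f : Fin k → Signomial n),
      actualNegCone f ⊆ ⋂ i, negCone (f i)) ∧
    (∀ (n : ℕ) (f : Signomial n) (F : Set (Fin n → ℝ)), f.IsFace F →
      ∀ x ∈ posOrth n, f.evalOn F x < 0 →
        ∃ μ ∈ f.supp, f.coeff μ < 0 ∧ μ ∈ F) := by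
  refine ⟨fun n k f v hv => ?_, fun n f F _ x hx h => f.exists_neg_of_evalOn_neg F x hx h⟩
  obtain ⟨x, hx, h⟩ := hv
  exact Set.mem_iInter.mpr fun i => (f i).exists_neg_of_evalOn_neg _ x hx (h i)
end

section
/- Let g : ℝ_{>0} → ℝ, g(t) = ∑_{i=1}^{d} a_i t^{ν_i} be a univariate signomial with real exponents ν₁ < ν₂ < … < ν_d and nonzero real coefficients a₁, …, a_d. Suppose there exist p ∈ {2, …, d} and ε > 0 such that (a_d − ε) t^{ν_d} + ∑_{i=p}^{d−1} a_i t^{ν_i} > 0 for all t > 0. Then for every δ with 0 < δ ≤ ν_p − ν_{p−1}, every t₀ ∈ ℝ_{>0} with g(t₀) = 0 satisfies t₀ ≤ max{ 1, ( (1/ε) ∑_{i=1}^{p−1} |a_i| )^{1/δ} }. -/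
/-- generalized Cauchy bound: Let `g(t) = ∑_{i=1}^d a_i t^{ν_i}` be a
univariate signomial with strictly increasing real exponents and nonzero coefficients.
If there are `p ∈ {2, …, d}` and `ε > 0` such that
`(a_d − ε) t^{ν_d} + ∑_{i=p}^{d−1} a_i t^{ν_i} > 0` for all `t > 0`, then for every
`0 < δ ≤ ν_p − ν_{p−1}`, every positive root `t₀` of `g` satisfies
`t₀ ≤ max 1 ((ε⁻¹ ∑_{i=1}^{p−1} |a_i|)^{1/δ})`. -/
theorem signomial_root_bound (d : ℕ) (a ν : ℕ → ℝ)
    (ha : ∀ i ∈ Finset.Icc 1 d, a i ≠ 0)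
    (hν : StrictMonoOn ν (Set.Icc 1 d))
    (p : ℕ) (hp1 : 2 ≤ p) (hp2 : p ≤ d)
    (ε : ℝ) (hε : 0 < ε)
    (hpos : ∀ t : ℝ, 0 < t →
      0 < (a d - ε) * t ^ (ν d) + ∑ i ∈ Finset.Ico p d, a i * t ^ (ν i))
    (δ : ℝ) (hδ0 : 0 < δ) (hδ : δ ≤ ν p - ν (p - 1))
    (t₀ : ℝ) (ht₀ : 0 < t₀)
    (hroot : ∑ i ∈ Finset.Icc 1 d, a i * t₀ ^ (ν i) = 0) :
    t₀ ≤ max 1 ((ε⁻¹ * ∑ i ∈ Finset.Ico 1 p, |a i|) ^ (1 / δ)) := by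
  rcases le_or_gt t₀ 1 with h1 | h1
  · exact le_max_of_le_left h1
  apply le_max_of_le_right
  have hsplit : ∑ i ∈ Finset.Icc 1 d, a i * t₀ ^ (ν i)
      = ∑ i ∈ Finset.Ico 1 p, a i * t₀ ^ (ν i)
        + (∑ i ∈ Finset.Ico p d, a i * t₀ ^ (ν i) + a d * t₀ ^ (ν d)) := by
    rw [← Finset.sum_Ico_succ_top hp2,
      Finset.sum_Ico_consecutive _ (by omega) (by omega)]
    rfl
  have hlow : -(∑ i ∈ Finset.Ico 1 p, a i * t₀ ^ (ν i))
      ≤ (∑ i ∈ Finset.Ico 1 p, |a i|) * t₀ ^ (ν (p - 1)) := by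
    rw [← Finset.sum_neg_distrib, Finset.sum_mul]
    apply Finset.sum_le_sum
    intro i hi
    rw [Finset.mem_Ico] at hi
    have hle : ν i ≤ ν (p - 1) :=
      hν.monotoneOn ⟨by omega, by omega⟩ ⟨by omega, by omega⟩ (by omega)
    have h2 : t₀ ^ (ν i) ≤ t₀ ^ (ν (p - 1)) := Real.rpow_le_rpow_of_exponent_le h1.le hle
    have h3 : 0 < t₀ ^ (ν i) := Real.rpow_pos_of_pos ht₀ _
    calc -(a i * t₀ ^ (ν i)) = (-a i) * t₀ ^ (ν i) := by ring
      _ ≤ |a i| * t₀ ^ (ν i) := mul_le_mul_of_nonneg_right (neg_le_abs _) h3.le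
      _ ≤ _ := mul_le_mul_of_nonneg_left h2 (abs_nonneg _)
  have hp := hpos t₀ ht₀
  have hpd : ν p ≤ ν d :=
    hν.monotoneOn ⟨by omega, by omega⟩ ⟨by omega, by omega⟩ hp2
  have hup : t₀ ^ δ * t₀ ^ (ν (p - 1)) ≤ t₀ ^ (ν d) := by
    rw [← Real.rpow_add ht₀]
    exact Real.rpow_le_rpow_of_exponent_le h1.le (by linarith)
  have hq : 0 < t₀ ^ (ν (p - 1)) := Real.rpow_pos_of_pos ht₀ _
  have h4 : ε * t₀ ^ δ * t₀ ^ (ν (p - 1))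
      ≤ (∑ i ∈ Finset.Ico 1 p, |a i|) * t₀ ^ (ν (p - 1)) := by
    have := mul_le_mul_of_nonneg_left hup hε.le
    linarith
  have h5 := le_of_mul_le_mul_right h4 hq
  have h6 : t₀ ^ δ ≤ ε⁻¹ * ∑ i ∈ Finset.Ico 1 p, |a i| := by
    rw [le_inv_mul_iff₀ hε]
    exact h5
  calc t₀ = (t₀ ^ δ) ^ (1 / δ) := by
        rw [← Real.rpow_mul ht₀.le, mul_one_div_cancel hδ0.ne', Real.rpow_one]
    _ ≤ _ := Real.rpow_le_rpow (Real.rpow_nonneg ht₀.le _) h6 (by positivity)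
end

section
/- Let f₁, …, f_k be signomials on ℝⁿ_{>0} and let w ∈ ⋂_{i=1}^{k} N_{f_i}^-. If there exists v ∈ ℝⁿ such that for every i = 1, …, k the face N(f_i)_v is a negative vertex of N(f_i) contained in the face N(f_i)_w, then w lies in the closure of the interior of ⋂_{i=1}^{k} N_{f_i}^-. -/
open Signomial in
/-- If `w ∈ ⋂ᵢ N_{fᵢ}^-` and there is `v` such that for every `i` the face
`N(fᵢ)_v` is a negative vertex of `N(fᵢ)` contained in `N(fᵢ)_w`, then `w` lies in the
closure of the interior of `⋂ᵢ N_{fᵢ}^-`. -/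
theorem mem_closure_interior_of_negVertex {n k : ℕ} (f : Fin k → Signomial n)
    (w : Fin n → ℝ) (hw : w ∈ ⋂ i, negCone (f i))
    (h : ∃ v : Fin n → ℝ, ∀ i, ∃ μ : Fin n → ℝ,
      (f i).faceAt v = {μ} ∧ μ ∈ (f i).supp ∧ (f i).coeff μ < 0 ∧
        μ ∈ (f i).faceAt w) :
    w ∈ closure (interior (⋂ i, negCone (f i))) := by
  obtain ⟨v, h⟩ := h
  choose μ hface hsupp hneg hwμ using h
  let U : Set (Fin n → ℝ) :=
    ⋂ i, ⋂ ν ∈ (f i).supp, {u | ν ≠ μ i → dot u ν < dot u (μ i)}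
  have hUo : IsOpen U := by
    refine isOpen_iInter_of_finite fun i => isOpen_biInter_finset fun ν _ => ?_
    by_cases hν : ν = μ i
    · simp [hν]
    · simp only [ne_eq, hν, not_false_eq_true, forall_const]
      unfold dot
      exact isOpen_lt (by fun_prop) (by fun_prop)
  have hUsub : U ⊆ ⋂ i, negCone (f i) := by
    intro u hu
    simp only [U, Set.mem_iInter, Set.mem_setOf_eq] at hu
    refine Set.mem_iInter.2 fun i => ⟨μ i, hsupp i, hneg i, subset_convexHull ℝ _ (hsupp i), ?_⟩
    have hconv : Convex ℝ {ν : Fin n → ℝ | dot u ν ≤ dot u (μ i)} := by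
      refine convex_halfSpace_le ⟨?_, ?_⟩ _
      · intro x y
        simp [dot, mul_add, Finset.sum_add_distrib]
      · intro c x
        simp only [dot, Pi.smul_apply, smul_eq_mul, Finset.mul_sum]
        exact Finset.sum_congr rfl fun j _ => by ring
    have := convexHull_min (s := ((f i).supp : Set (Fin n → ℝ))) (fun ν hν => by
      by_cases e : ν = μ i
      · simp [e]
      · exact (hu i ν hν e).le) hconv
    exact fun ν hν => this hν
  have hmem : ∀ t : ℝ, 0 < t → w + t • v ∈ U := by
    intro t ht
    simp only [U, Set.mem_iInter, Set.mem_setOf_eq]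
    intro i ν hν hne
    have hνN : ν ∈ (f i).newton := subset_convexHull ℝ _ hν
    have hd : ∀ x, dot (w + t • v) x = dot w x + t * dot v x := by
      intro x
      simp [dot, add_mul, Finset.sum_add_distrib, Finset.mul_sum, mul_assoc]
    have h1 := (hwμ i).2 ν hνN
    have hv : μ i ∈ (f i).faceAt v := by rw [hface i]; rfl
    have h2 : dot v ν < dot v (μ i) := by
      by_contra hc
      have : ν ∈ (f i).faceAt v :=
        ⟨hνN, fun ξ hξ => (hv.2 ξ hξ).trans (not_lt.1 hc)⟩
      rw [hface i] at this
      exact hne this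
    rw [hd, hd]
    have := mul_lt_mul_of_pos_left h2 ht
    linarith
  have hlim : Filter.Tendsto (fun t : ℝ => w + t • v) (nhdsWithin 0 (Set.Ioi 0)) (nhds w) := by
    have hc : Continuous fun t : ℝ => w + t • v := by fun_prop
    have := hc.tendsto 0
    simp only [zero_smul, add_zero] at this
    exact this.mono_left nhdsWithin_le_nhds
  refine mem_closure_of_tendsto hlim ?_
  filter_upwards [self_mem_nhdsWithin] with t ht
  exact interior_maximal hUsub hUo (hmem t ht)
end

section
/- Let f₁, …, f_k be signomials on ℝⁿ_{>0} and let w ∈ ⋂_{i=1}^{k} N_{f_i}^-. If w lies in the closure of the interior of ⋂_{i=1}^{k} N_{f_i}^-, then there exists v ∈ ℝⁿ such that for every i = 1, …, k the face N(f_i)_v is a negative vertex of N(f_i) contained in the face N(f_i)_w. -/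
namespace Signomial

lemma dot_eq {n : ℕ} (v μ : Fin n → ℝ) : dot v μ = v ⬝ᵥ μ := rfl

lemma continuous_dot {n : ℕ} (μ : Fin n → ℝ) : Continuous fun v : Fin n → ℝ => dot v μ := by
  unfold dot
  fun_prop

lemma dense_dot_ne {n : ℕ} {a b : Fin n → ℝ} (hab : a ≠ b) :
    Dense {v : Fin n → ℝ | dot v a ≠ dot v b} := by
  let S : Submodule ℝ (Fin n → ℝ) :=
    { carrier := {v | v ⬝ᵥ (a - b) = 0}
      add_mem' := by
        intro x y hx hy
        simp only [Set.mem_setOf_eq] at *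
        rw [add_dotProduct, hx, hy, add_zero]
      zero_mem' := by simp
      smul_mem' := by
        intro c x hx
        simp only [Set.mem_setOf_eq] at *
        rw [smul_dotProduct, hx, smul_zero] }
  have hS : {v : Fin n → ℝ | dot v a ≠ dot v b} = (S : Set (Fin n → ℝ))ᶜ := by
    ext v
    change dot v a ≠ dot v b ↔ ¬ (v ⬝ᵥ (a - b) = 0)
    rw [dot_eq, dot_eq, dotProduct_sub, sub_eq_zero]
  rw [hS, ← interior_eq_empty_iff_dense_compl]
  by_contra hne
  have htop := S.eq_top_of_nonempty_interior' (Set.nonempty_iff_ne_empty.mpr hne)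
  have hmem : a - b ∈ S := by rw [htop]; trivial
  have h0 : (a - b) ⬝ᵥ (a - b) = 0 := hmem
  exact hab (sub_eq_zero.mp (dotProduct_self_eq_zero.mp h0))

lemma newton_dot_le {n : ℕ} (f : Signomial n) (v : Fin n → ℝ) (c : ℝ)
    (h : ∀ ν ∈ f.supp, dot v ν ≤ c) : ∀ ν ∈ f.newton, dot v ν ≤ c := by
  have hc : Convex ℝ {ν : Fin n → ℝ | dot v ν ≤ c} := by
    intro x hx y hy s t hs ht hst
    simp only [Set.mem_setOf_eq, dot_eq] at *
    rw [dotProduct_add, dotProduct_smul, dotProduct_smul, smul_eq_mul, smul_eq_mul]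
    have h1 := mul_le_mul_of_nonneg_left hx hs
    have h2 := mul_le_mul_of_nonneg_left hy ht
    have h3 : s * c + t * c = c := by rw [← add_mul, hst, one_mul]
    linarith
  intro ν hν
  exact convexHull_min (fun x hx => h x hx) hc hν

lemma newton_eq_or_lt {n : ℕ} (f : Signomial n) (v μ : Fin n → ℝ)
    (h : ∀ ν ∈ f.supp, ν = μ ∨ dot v ν < dot v μ) :
    ∀ ν ∈ f.newton, ν = μ ∨ dot v ν < dot v μ := by
  have hc : Convex ℝ {ν : Fin n → ℝ | ν = μ ∨ dot v ν < dot v μ} := by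
    rw [convex_iff_forall_pos]
    intro x hx y hy s t hs ht hst
    simp only [Set.mem_setOf_eq, dot_eq] at *
    rw [dotProduct_add, dotProduct_smul, dotProduct_smul, smul_eq_mul, smul_eq_mul]
    have h3 : s * (v ⬝ᵥ μ) + t * (v ⬝ᵥ μ) = v ⬝ᵥ μ := by rw [← add_mul, hst, one_mul]
    rcases hx with rfl | hx <;> rcases hy with rfl | hy
    · left; rw [← add_smul, hst, one_smul]
    · right; have h2 := mul_lt_mul_of_pos_left hy ht; linarith
    · right; have h2 := mul_lt_mul_of_pos_left hx hs; linarith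
    · right
      have h1 := mul_lt_mul_of_pos_left hx hs
      have h2 := mul_lt_mul_of_pos_left hy ht
      linarith
  intro ν hν
  exact convexHull_min (fun x hx => h x hx) hc hν

end Signomial

open Signomial in
/-- If `w ∈ ⋂ᵢ N_{fᵢ}^-` lies in the closure of the interior of
`⋂ᵢ N_{fᵢ}^-`, then there is `v` such that for every `i` the face `N(fᵢ)_v` is a
negative vertex of `N(fᵢ)` contained in `N(fᵢ)_w`. -/
theorem negVertex_of_mem_closure_interior {n k : ℕ} (f : Fin k → Signomial n)
    (w : Fin n → ℝ) (hw : w ∈ ⋂ i, negCone (f i))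
    (h : w ∈ closure (interior (⋂ i, negCone (f i)))) :
    ∃ v : Fin n → ℝ, ∀ i, ∃ μ : Fin n → ℝ,
      (f i).faceAt v = {μ} ∧ μ ∈ (f i).supp ∧ (f i).coeff μ < 0 ∧
        μ ∈ (f i).faceAt w := by
  classical
  let P := Σ i : Fin k, (f i).supp × (f i).supp
  have hV : ∀ᶠ v in nhds w, ∀ p : P, dot w p.2.1.1 < dot w p.2.2.1 →
      dot v p.2.1.1 < dot v p.2.2.1 := by
    rw [Filter.eventually_all]
    intro p
    by_cases hp : dot w p.2.1.1 < dot w p.2.2.1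
    · filter_upwards [(continuous_dot p.2.1.1).continuousAt.eventually_lt
        (continuous_dot p.2.2.1).continuousAt hp] with v hv _ using hv
    · exact Filter.Eventually.of_forall fun v h' => absurd h' hp
  have hG : Dense (⋂ p : P, {v : Fin n → ℝ | p.2.1.1 ≠ p.2.2.1 →
      dot v p.2.1.1 ≠ dot v p.2.2.1}) := by
    apply dense_iInter_of_isOpen
    · intro p
      by_cases hp : p.2.1.1 = p.2.2.1
      · simp [hp]
      · simp only [ne_eq, hp, not_false_eq_true, true_imp_iff]
        exact isOpen_ne_fun (continuous_dot _) (continuous_dot _)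
    · intro p
      by_cases hp : p.2.1.1 = p.2.2.1
      · simp [hp]
      · simp only [ne_eq, hp, not_false_eq_true, true_imp_iff]
        exact dense_dot_ne hp
  obtain ⟨V, hVsub, hVo, hwV⟩ := mem_nhds_iff.mp hV
  obtain ⟨u, huV, huU⟩ := mem_closure_iff.mp h V hVo hwV
  obtain ⟨v, ⟨hvV, hvU⟩, hvG⟩ :=
    (hG.inter_open_nonempty _ (hVo.inter isOpen_interior) ⟨u, huV, huU⟩)
  refine ⟨v, fun i => ?_⟩
  obtain ⟨μ, hμ, hneg, hface⟩ := Set.mem_iInter.mp (interior_subset hvU) i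
  have hsub : ∀ ν ∈ (f i).supp, ν ∈ (f i).newton := fun ν hν => subset_convexHull ℝ _ hν
  refine ⟨μ, ?_, hμ, hneg, hsub μ hμ, ?_⟩
  · have key := newton_eq_or_lt (f i) v μ (fun ν hν => by
      by_cases hne : ν = μ
      · exact Or.inl hne
      · right
        have h1 : dot v ν ≠ dot v μ :=
          Set.mem_iInter.mp hvG (⟨i, ⟨ν, hν⟩, ⟨μ, hμ⟩⟩ : P) hne
        exact lt_of_le_of_ne (hface.2 ν (hsub ν hν)) h1)
    ext x
    constructor
    · intro hx
      rcases key x hx.1 with h1 | h1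
      · exact h1
      · exact absurd (hx.2 μ (hsub μ hμ)) (not_le.mpr h1)
    · rintro rfl
      exact hface
  · apply newton_dot_le
    intro ν hν
    by_contra hlt
    have h1 : dot v μ < dot v ν :=
      hVsub hvV (⟨i, ⟨μ, hμ⟩, ⟨ν, hν⟩⟩ : P) (not_le.mp hlt)
    exact absurd (hface.2 ν (hsub ν hν)) (not_le.mpr h1)
end

section
/- Let f₁, …, f_k be signomials on ℝⁿ_{>0}. Then the interior of the intersection of the negative normal cones is contained in the actual negative normal cone: int( ⋂_{i=1}^{k} N_{f_i}^- ) ⊆ Σ(f₁, …, f_k). -/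
namespace Signomial

variable {n : ℕ}

lemma dot_add_smul' (v u μ : Fin n → ℝ) (e : ℝ) :
    dot (v + e • u) μ = dot v μ + e * dot u μ := by
  simp only [dot, Pi.add_apply, Pi.smul_apply, smul_eq_mul, Finset.mul_sum,
    ← Finset.sum_add_distrib]
  exact Finset.sum_congr rfl fun i _ => by ring

lemma exists_generic (A : Finset (Fin n → ℝ)) :
    ∃ u : Fin n → ℝ, ∀ μ ∈ A, ∀ ν ∈ A, μ ≠ ν → dot u μ ≠ dot u ν := by
  classical
  let L : A.offDiag → Module.Dual ℝ (Fin n → ℝ) := fun p =>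
    ∑ i, (p.1.1 i - p.1.2 i) • LinearMap.proj i
  have hL : ∀ p u, L p u = dot u p.1.1 - dot u p.1.2 := by
    intro p u
    simp only [L, dot, LinearMap.sum_apply, LinearMap.smul_apply, LinearMap.proj_apply,
      smul_eq_mul, ← Finset.sum_sub_distrib]
    exact Finset.sum_congr rfl fun i _ => by ring
  obtain ⟨u, hu⟩ := Module.Dual.exists_forall_ne_zero_of_forall_exists L (by
    rintro ⟨⟨μ, ν⟩, hp⟩
    have hne : μ ≠ ν := by simpa using (Finset.mem_offDiag.1 hp).2.2
    obtain ⟨i, hi⟩ := Function.ne_iff.1 hne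
    refine ⟨Pi.single i 1, ?_⟩
    rw [hL]
    simp [dot, Pi.single_apply, sub_eq_zero, hi])
  refine ⟨u, fun μ hμ ν hν hne h => ?_⟩
  have := hu ⟨(μ, ν), by simp [hμ, hν, hne]⟩
  rw [hL] at this
  exact this (sub_eq_zero.2 h)

lemma mono_exp (u μ : Fin n → ℝ) (t : ℝ) :
    mono (fun i => Real.exp (t * u i)) μ = Real.exp (t * dot u μ) := by
  simp only [mono, dot, Finset.mul_sum, Real.exp_sum]
  refine Finset.prod_congr rfl fun i _ => ?_
  rw [← Real.exp_mul]
  ring_nf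

open Filter Topology in
lemma eventually_neg (f : Signomial n) (v u : Fin n → ℝ)
    (hu : ∀ μ ∈ f.supp, ∀ ν ∈ f.supp, μ ≠ ν → dot u μ ≠ dot u ν)
    (hv : v ∈ interior f.negCone) :
    ∀ᶠ t : ℝ in atTop, f.evalOn (f.faceAt v) (fun i => Real.exp (t * u i)) < 0 := by
  classical
  have hsub : ∀ μ ∈ f.supp, μ ∈ f.newton := fun μ hμ => subset_convexHull ℝ _ hμ
  obtain ⟨μ₀, hμ₀, -, hμ₀f⟩ := interior_subset hv
  obtain ⟨m, hm, hmax⟩ := Finset.exists_max_image (f.supp.filter (· ∈ f.faceAt v)) (dot u)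
    ⟨μ₀, Finset.mem_filter.2 ⟨hμ₀, hμ₀f⟩⟩
  obtain ⟨hms, hmf⟩ := Finset.mem_filter.1 hm
  have hlt : ∀ ν ∈ f.supp, ν ∈ f.faceAt v → ν ≠ m → dot u ν < dot u m := fun ν h1 h2 h3 =>
    lt_of_le_of_ne (hmax ν (Finset.mem_filter.2 ⟨h1, h2⟩)) (hu ν h1 m hms h3)
  -- m is negative
  have hneg : f.coeff m < 0 := by
    have h1 : ∀ᶠ e : ℝ in 𝓝[>] 0, v + e • u ∈ f.negCone := by
      have hc : Tendsto (fun e : ℝ => v + e • u) (𝓝 0) (𝓝 v) := by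
        have : Continuous (fun e : ℝ => v + e • u) := by fun_prop
        simpa using this.tendsto 0
      exact (hc.mono_left nhdsWithin_le_nhds).eventually (mem_interior_iff_mem_nhds.1 hv)
    have h2 : ∀ᶠ e : ℝ in 𝓝[>] 0, ∀ ν ∈ f.supp, ν ≠ m →
        dot (v + e • u) ν < dot (v + e • u) m := by
      refine (Finset.eventually_all f.supp).2 fun ν hν => ?_
      by_cases hne : ν = m
      · exact Eventually.of_forall fun _ h => absurd hne h
      by_cases hf : ν ∈ f.faceAt v
      · filter_upwards [self_mem_nhdsWithin] with e he _
        have he : (0:ℝ) < e := he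
        rw [dot_add_smul', dot_add_smul']
        have := hmf.2 ν (hsub ν hν)
        have := mul_lt_mul_of_pos_left (hlt ν hν hf hne) he
        linarith
      · have hlt' : dot v ν < dot v m := by
          by_contra! hcon
          exact hf ⟨hsub ν hν, fun κ hκ => (hmf.2 κ hκ).trans hcon⟩
        have ha : Tendsto (fun e : ℝ => dot v ν + e * dot u ν) (𝓝[>] 0) (𝓝 (dot v ν)) := by
          have : Continuous (fun e : ℝ => dot v ν + e * dot u ν) := by fun_prop
          have := this.tendsto 0
          simp only [zero_mul, add_zero] at this
          exact this.mono_left nhdsWithin_le_nhds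
        have hb : Tendsto (fun e : ℝ => dot v m + e * dot u m) (𝓝[>] 0) (𝓝 (dot v m)) := by
          have : Continuous (fun e : ℝ => dot v m + e * dot u m) := by fun_prop
          have := this.tendsto 0
          simp only [zero_mul, add_zero] at this
          exact this.mono_left nhdsWithin_le_nhds
        filter_upwards [ha.eventually_lt hb hlt'] with e he _
        rwa [dot_add_smul', dot_add_smul']
    obtain ⟨e, ⟨κ, hκ, hκn, hκf⟩, he⟩ := (h1.and h2).exists
    by_cases hk : κ = m
    · exact hk ▸ hκn
    · exact absurd (hκf.2 m (hsub m hms)) (not_le.2 (he κ hκ hk))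
  have hlim : Tendsto (fun t : ℝ => ∑ μ ∈ f.supp, if μ ∈ f.faceAt v then
      f.coeff μ * Real.exp (t * (dot u μ - dot u m)) else 0) atTop
      (𝓝 (∑ μ ∈ f.supp, if μ = m then f.coeff m else 0)) := by
    refine tendsto_finsetSum _ fun μ hμ => ?_
    by_cases hne : μ = m
    · subst hne
      simp [hmf]
    by_cases hf : μ ∈ f.faceAt v
    · simp only [hf, hne, if_true, if_false]
      have : Tendsto (fun t : ℝ => t * (dot u μ - dot u m)) atTop atBot :=
        tendsto_id.atTop_mul_const_of_neg (sub_neg.2 (hlt μ hμ hf hne))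
      simpa using (Real.tendsto_exp_atBot.comp this).const_mul (f.coeff μ)
    · simp [hf, hne]
  rw [Finset.sum_ite_eq' f.supp m, if_pos hms] at hlim
  filter_upwards [hlim.eventually_lt_const hneg] with t ht
  have : f.evalOn (f.faceAt v) (fun i => Real.exp (t * u i)) =
      Real.exp (t * dot u m) * ∑ μ ∈ f.supp, if μ ∈ f.faceAt v then
      f.coeff μ * Real.exp (t * (dot u μ - dot u m)) else 0 := by
    rw [evalOn, Finset.mul_sum]
    refine Finset.sum_congr rfl fun μ _ => ?_
    split_ifs
    · rw [mono_exp, mul_left_comm, ← Real.exp_add]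
      ring_nf
    · simp
  rw [this]
  exact mul_neg_of_pos_of_neg (Real.exp_pos _) ht

end Signomial

open Signomial in
/-- `int(⋂ᵢ N_{fᵢ}^-) ⊆ Σ(f₁, …, f_k)`. -/
theorem interior_negCones_subset_actualNegCone {n k : ℕ} (f : Fin k → Signomial n) :
    interior (⋂ i, negCone (f i)) ⊆ actualNegCone f := by
  classical
  intro v hv
  obtain ⟨u, hu⟩ := exists_generic (Finset.univ.biUnion fun i => (f i).supp)
  have h : ∀ i, ∀ᶠ t : ℝ in Filter.atTop,
      (f i).evalOn ((f i).faceAt v) (fun j => Real.exp (t * u j)) < 0 := fun i =>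
    eventually_neg (f i) v u
      (fun μ hμ ν hν => hu μ (Finset.mem_biUnion.2 ⟨i, Finset.mem_univ _, hμ⟩) ν
        (Finset.mem_biUnion.2 ⟨i, Finset.mem_univ _, hν⟩))
      (interior_mono (Set.iInter_subset _ i) hv)
  obtain ⟨t, ht⟩ := (Filter.eventually_all.2 h).exists
  exact ⟨_, fun j => Real.exp_pos _, ht⟩
end

section
/- Let f be a signomial on ℝⁿ_{>0} such that every negative exponent vector of f lies in the interior of the Newton polytope, i.e. σ₋(f) ⊆ int(N(f)). Then the image of S(f) = f^{-1}(ℝ_{<0}) under the coordinate-wise natural logarithm map Log : ℝⁿ_{>0} → ℝⁿ, x ↦ (ln x₁, …, ln x_n), is a bounded subset of ℝⁿ. -/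
open Signomial in
theorem mono_eq_exp_aux {n : ℕ} (x μ : Fin n → ℝ) (hx : ∀ i, 0 < x i) :
    mono x μ = Real.exp (dot (fun i => Real.log (x i)) μ) := by
  unfold mono dot
  rw [Real.exp_sum]
  exact Finset.prod_congr rfl fun i _ => Real.rpow_def_of_pos (hx i) _

open Signomial in
theorem dot_le_of_newton_aux {n : ℕ} (f : Signomial n) (y : Fin n → ℝ) (M : ℝ)
    (hM : ∀ μ ∈ f.supp, dot y μ ≤ M) (ν : Fin n → ℝ) (hν : ν ∈ f.newton) : dot y ν ≤ M := by
  have hl : IsLinearMap ℝ (dot y) :=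
    ⟨fun a b => by simp [dot, mul_add, Finset.sum_add_distrib],
     fun c a => by simp [dot, Finset.mul_sum, mul_left_comm]⟩
  exact convexHull_min (t := {w | dot y w ≤ M}) (fun μ hμ => hM μ hμ)
    (convex_halfSpace_le hl M) hν

open Signomial in
theorem exists_radius_aux {n : ℕ} (f : Signomial n)
    (h : ∀ μ ∈ f.supp, f.coeff μ < 0 → μ ∈ interior f.newton) :
    ∃ r > 0, ∀ μ ∈ f.supp, (f.coeff μ < 0 → Metric.closedBall μ r ⊆ f.newton) ∧
      (0 < f.coeff μ → r ≤ f.coeff μ) := by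
  have key : ∀ᶠ r in nhdsWithin (0:ℝ) (Set.Ioi 0), ∀ μ ∈ f.supp,
      (f.coeff μ < 0 → Metric.closedBall μ r ⊆ f.newton) ∧
      (0 < f.coeff μ → r ≤ f.coeff μ) := by
    rw [Filter.eventually_all_finset]
    intro μ hμ
    rcases lt_or_gt_of_ne (f.coeff_ne_zero μ hμ) with hc | hc
    · obtain ⟨e, he, hb⟩ := Metric.nhds_basis_closedBall.mem_iff.1
        (mem_interior_iff_mem_nhds.1 (h μ hμ hc))
      filter_upwards [Ioc_mem_nhdsGT he] with r hr
      exact ⟨fun _ => (Metric.closedBall_subset_closedBall hr.2).trans hb,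
        fun h' => absurd hc h'.not_gt⟩
    · filter_upwards [Ioc_mem_nhdsGT hc] with r hr
      exact ⟨fun h' => absurd hc h'.not_gt, fun _ => hr.2⟩
  obtain ⟨r, hr, hr0⟩ := (key.and self_mem_nhdsWithin).exists
  exact ⟨r, hr0, hr⟩

open Signomial in
/-- If every negative exponent vector of `f` lies in the interior of the
Newton polytope `N(f)`, then the image of `S(f) = f⁻¹(ℝ_{<0})` under the coordinate-wise
logarithm map is bounded. -/
theorem log_image_bounded {n : ℕ} (f : Signomial n)
    (h : ∀ μ ∈ f.supp, f.coeff μ < 0 → μ ∈ interior f.newton) :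
    Bornology.IsBounded ((fun x : Fin n → ℝ => fun i => Real.log (x i)) '' negSet₁ f) := by
  obtain ⟨r, hr, hrad⟩ := exists_radius_aux f h
  set C : ℝ := ∑ μ ∈ f.supp, |f.coeff μ| with hC
  have hC0 : 0 ≤ C := Finset.sum_nonneg fun _ _ => abs_nonneg _
  have hR : 0 ≤ C / (r * r) := by positivity
  refine isBounded_iff_forall_norm_le.2 ⟨C / (r * r), ?_⟩
  rintro _ ⟨x, ⟨hx, hneg⟩, rfl⟩
  rw [pi_norm_le_iff_of_nonneg hR]
  intro i
  set y : Fin n → ℝ := fun i => Real.log (x i) with hy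
  change |y i| ≤ _
  by_contra! hlt
  have hyi : 0 < |y i| := hR.trans_lt hlt
  set t := r * |y i| with ht
  have ht0 : 0 < t := by positivity
  have hCt : C < r * t := by
    rw [div_lt_iff₀ (by positivity)] at hlt
    rw [ht]; linarith
  have hev : f.eval x = ∑ μ ∈ f.supp, f.coeff μ * Real.exp (dot y μ) :=
    Finset.sum_congr rfl fun μ _ => by rw [mono_eq_exp_aux x μ hx]
  rw [hev] at hneg
  have hne : f.supp.Nonempty := by
    by_contra hemp
    rw [Finset.not_nonempty_iff_eq_empty] at hemp
    simp [hemp] at hneg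
  obtain ⟨ν, hν, hmax⟩ := f.supp.exists_max_image (dot y) hne
  have hgap : ∀ μ ∈ f.supp, f.coeff μ < 0 → dot y μ ≤ dot y ν - t := by
    intro μ hμ hc
    have hmem : μ + Pi.single i (r * SignType.sign (y i)) ∈ f.newton := by
      apply (hrad μ hμ).1 hc
      rw [mem_closedBall_iff_norm, add_sub_cancel_left, Pi.norm_single, norm_mul,
        Real.norm_of_nonneg hr.le]
      have : ‖((SignType.sign (y i) : SignType) : ℝ)‖ ≤ 1 := by
        cases SignType.sign (y i) <;> simp
      nlinarith
    have h1 := dot_le_of_newton_aux f y _ hmax _ hmem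
    have h2 : dot y (μ + Pi.single i (r * SignType.sign (y i))) = dot y μ + t := by
      simp only [dot, Pi.add_apply, mul_add, Finset.sum_add_distrib]
      congr 1
      rw [Finset.sum_eq_single i]
      · rw [Pi.single_eq_same, ht, ← self_mul_sign (y i)]; ring
      · intro j _ hj; simp [Pi.single_eq_of_ne hj]
      · simp
    linarith
  have hνpos : 0 < f.coeff ν := by
    rcases lt_or_gt_of_ne (f.coeff_ne_zero ν hν) with hc | hc
    · have := hgap ν hν hc; linarith
    · exact hc
  have hνr := (hrad ν hν).2 hνpos
  have hterm : ∀ μ ∈ f.supp,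
      0 ≤ f.coeff μ * Real.exp (dot y μ) + |f.coeff μ| * Real.exp (dot y ν - t) := by
    intro μ hμ
    rcases lt_or_gt_of_ne (f.coeff_ne_zero μ hμ) with hc | hc
    · have := Real.exp_le_exp.2 (hgap μ hμ hc)
      rw [abs_of_neg hc]
      nlinarith
    · positivity
  have hs := Finset.single_le_sum hterm hν
  rw [Finset.sum_add_distrib, ← Finset.sum_mul, ← hC] at hs
  have e1 : Real.exp (dot y ν) = Real.exp (dot y ν - t) * Real.exp t := by
    rw [← Real.exp_add]; ring_nf
  have hE := Real.exp_pos (dot y ν - t)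
  have h3 : 0 ≤ |f.coeff ν| * Real.exp (dot y ν - t) := by positivity
  have h4 : r * Real.exp (dot y ν) ≤ f.coeff ν * Real.exp (dot y ν) := by gcongr
  have h5 : C < r * Real.exp t := by
    have := Real.add_one_le_exp t
    nlinarith
  have h6 := mul_lt_mul_of_pos_right h5 hE
  rw [e1] at h4 hs
  linarith
end

section
/- Let f be a signomial on ℝⁿ_{>0} such that for every face F of N(f) the following non-boundary condition holds: if f_{|F}(x) ≥ 0 for all x ∈ ℝⁿ_{>0}, then f_{|F} lies in the interior of the nonnegativity cone P⁺_{σ(f)∩F}. Then Trop(S(f)) = Σ(f), where S(f) = f^{-1}(ℝ_{<0}). -/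
namespace Signomial

variable {n : ℕ}

lemma aux_mono_exp {x : Fin n → ℝ} (hx : x ∈ posOrth n) (μ : Fin n → ℝ) :
    mono x μ = Real.exp (dot (fun i => Real.log (x i)) μ) := by
  unfold mono dot
  rw [Real.exp_sum]
  exact Finset.prod_congr rfl fun i _ => Real.rpow_def_of_pos (hx i) _

lemma aux_dot_convex (v : Fin n → ℝ) (d : ℝ) : Convex ℝ {ν : Fin n → ℝ | dot v ν ≤ d} := by
  apply convex_halfSpace_le
  constructor
  · intro x y
    simp [dot, mul_add, Finset.sum_add_distrib]
  · intro c x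
    simp only [dot, Pi.smul_apply, smul_eq_mul, Finset.mul_sum]
    exact Finset.sum_congr rfl fun i _ => by ring

lemma aux_mem_face (f : Signomial n) (v : Fin n → ℝ) {μ : Fin n → ℝ} (hμ : μ ∈ f.supp)
    (h : ∀ ν ∈ f.supp, dot v ν ≤ dot v μ) : μ ∈ f.faceAt v := by
  refine ⟨subset_convexHull ℝ _ hμ, fun ν hν => ?_⟩
  exact convexHull_min (t := {ν | dot v ν ≤ dot v μ}) (fun ν hν => h ν hν)
    (aux_dot_convex v _) hν

lemma aux_exists_max (f : Signomial n) (v : Fin n → ℝ) (hne : f.supp.Nonempty) :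
    ∃ μ ∈ f.supp, μ ∈ f.faceAt v ∧ (∀ ν ∈ f.supp, ν ∈ f.faceAt v → dot v ν = dot v μ) ∧
      (∀ ν ∈ f.supp, ν ∉ f.faceAt v → dot v ν < dot v μ) := by
  obtain ⟨μ, hμ, hmax⟩ := Finset.exists_max_image f.supp (dot v) hne
  refine ⟨μ, hμ, aux_mem_face f v hμ hmax, fun ν hν hF => ?_, fun ν hν hF => ?_⟩
  · exact le_antisymm (hmax ν hν) (hF.2 μ (subset_convexHull ℝ _ hμ))
  · by_contra hlt
    push Not at hlt
    exact hF (aux_mem_face f v hν fun κ hκ => (hmax κ hκ).trans hlt)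

lemma aux_supp_nonempty_of_eval {f : Signomial n} {x : Fin n → ℝ} (h : f.eval x < 0) :
    f.supp.Nonempty := by
  by_contra hne
  rw [Finset.not_nonempty_iff_eq_empty] at hne
  simp [eval, hne] at h

lemma aux_supp_nonempty_of_evalOn {f : Signomial n} {S : Set (Fin n → ℝ)} {x : Fin n → ℝ}
    (h : f.evalOn S x < 0) : f.supp.Nonempty := by
  by_contra hne
  rw [Finset.not_nonempty_iff_eq_empty] at hne
  simp [evalOn, hne] at h

lemma aux_evalOn_eq (f : Signomial n) (F : Set (Fin n → ℝ)) (x : Fin n → ℝ) :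
    evalVec (f.restSupp F) (coeffVec f (f.restSupp F)) x = f.evalOn F x := by
  classical
  unfold evalVec evalOn coeffVec
  rw [Finset.sum_coe_sort (f.restSupp F) (fun μ => f.coeff μ * mono x μ)]
  unfold restSupp
  rw [Finset.sum_filter]

lemma aux_interior {A : Finset (Fin n → ℝ)} {c : A → ℝ} (h : c ∈ interior (nonnegConeSet A)) :
    ∃ ε > 0, ∀ x ∈ posOrth n, ε * ∑ μ : A, mono x (μ : Fin n → ℝ) ≤ evalVec A c x := by
  rw [mem_interior_iff_mem_nhds] at h
  have ht : Filter.Tendsto (fun e : ℝ => (fun a : A => c a - e)) (nhds 0) (nhds c) := by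
    have : Continuous (fun e : ℝ => (fun a : A => c a - e)) := by fun_prop
    simpa using this.tendsto 0
  obtain ⟨δ, hδ, hb⟩ := Metric.eventually_nhds_iff.mp (ht h)
  refine ⟨δ / 2, by positivity, fun x hx => ?_⟩
  have h1 := hb (y := δ / 2) (by rw [Real.dist_eq, sub_zero, abs_of_pos (by positivity)]; linarith)
  have h2 := h1 x hx
  unfold evalVec at h2 ⊢
  simp only [sub_mul, Finset.sum_sub_distrib, ← Finset.mul_sum] at h2
  linarith

lemma aux_superset (f : Signomial n) {v : Fin n → ℝ} (hv : v ∈ actualNegCone₁ f) :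
    v ∈ trop (negSet₁ f) := by
  classical
  obtain ⟨x, hx, hneg⟩ := hv
  obtain ⟨μ₀, hμ₀, -, heq, hlt⟩ := aux_exists_max f v (aux_supp_nonempty_of_evalOn hneg)
  let X : ℝ → Fin n → ℝ := fun s i => x i * Real.exp (s * v i)
  have hX : ∀ s, X s ∈ posOrth n := fun s i => mul_pos (hx i) (Real.exp_pos _)
  have hlog : ∀ s i, Real.log (X s i) = Real.log (x i) + s * v i := fun s i => by
    simp only [X]
    rw [Real.log_mul (hx i).ne' (Real.exp_pos _).ne', Real.log_exp]
  have hmono : ∀ s μ, mono (X s) μ = mono x μ * Real.exp (s * dot v μ) := fun s μ => by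
    rw [aux_mono_exp (hX s), aux_mono_exp hx, ← Real.exp_add]
    congr 1
    simp only [hlog, dot, Finset.mul_sum, ← Finset.sum_add_distrib]
    exact Finset.sum_congr rfl fun i _ => by ring
  have hlim : Filter.Tendsto (fun s => f.eval (X s) * Real.exp (-(s * dot v μ₀)))
      Filter.atTop (nhds (f.evalOn (f.faceAt v) x)) := by
    have : (fun s => f.eval (X s) * Real.exp (-(s * dot v μ₀))) =
        fun s => ∑ μ ∈ f.supp, f.coeff μ * mono x μ * Real.exp (s * (dot v μ - dot v μ₀)) := by
      funext s
      unfold eval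
      rw [Finset.sum_mul]
      refine Finset.sum_congr rfl fun μ _ => ?_
      rw [hmono, mul_sub, sub_eq_add_neg, Real.exp_add]
      ring
    rw [this]
    unfold evalOn
    refine tendsto_finsetSum _ fun μ hμ => ?_
    split_ifs with hF
    · simp [heq μ hμ hF]
    · have h1 : Filter.Tendsto (fun s : ℝ => Real.exp (s * (dot v μ - dot v μ₀)))
          Filter.atTop (nhds 0) :=
        Real.tendsto_exp_atBot.comp
          (Filter.tendsto_id.atTop_mul_const_of_neg (sub_neg.mpr (hlt μ hμ hF)))
      simpa using h1.const_mul (f.coeff μ * mono x μ)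
  obtain ⟨N, hN⟩ := Filter.eventually_atTop.mp (hlim.eventually_lt_const hneg)
  let s : ℕ → ℝ := fun m => max N 1 + m
  have hs0 : ∀ m, 0 < s m := fun m => by
    have : (1 : ℝ) ≤ max N 1 := le_max_right _ _
    have : (0 : ℝ) ≤ m := Nat.cast_nonneg m
    simp only [s]; linarith
  have hsN : ∀ m, N ≤ s m := fun m => by
    have : N ≤ max N 1 := le_max_left _ _
    have : (0 : ℝ) ≤ m := Nat.cast_nonneg m
    simp only [s]; linarith
  have hs : Filter.Tendsto s Filter.atTop Filter.atTop :=
    Filter.tendsto_atTop_add_const_left _ _ tendsto_natCast_atTop_atTop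
  refine ⟨fun m => X (s m), fun m => Real.exp (s m), fun m => ⟨hX _, ?_⟩,
    fun m => Real.one_lt_exp_iff.mpr (hs0 m), Real.tendsto_exp_atTop.comp hs, ?_⟩
  · have := hN _ (hsN m)
    by_contra hge
    push Not at hge
    exact absurd this (not_lt.mpr (mul_nonneg hge (Real.exp_pos _).le))
  · rw [tendsto_pi_nhds]
    intro i
    have h1 : (fun m => Real.log (X (s m) i) / Real.log (Real.exp (s m))) =
        fun m => Real.log (x i) / s m + v i := by
      funext m
      rw [hlog, Real.log_exp, add_div, mul_div_cancel_left₀ _ (hs0 m).ne']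
    rw [h1]
    simpa using (hs.const_div_atTop (Real.log (x i))).add_const (v i)

lemma aux_subset (f : Signomial n) (hNB : NBcond f) {w : Fin n → ℝ}
    (hw : w ∈ trop (negSet₁ f)) : w ∈ actualNegCone₁ f := by
  classical
  obtain ⟨x, t, hxS, ht1, ht, hlim⟩ := hw
  by_contra hcon
  have hpos : ∀ y ∈ posOrth n, 0 ≤ f.evalOn (f.faceAt w) y := fun y hy => by
    by_contra hlt
    exact hcon ⟨y, hy, not_le.mp hlt⟩
  obtain ⟨μ₀, hμ₀, hμF, -, hlt⟩ := aux_exists_max f w (aux_supp_nonempty_of_eval (hxS 0).2)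
  have hint := hNB (f.faceAt w) ⟨⟨μ₀, hμF⟩, w, rfl⟩
    (fun y hy => by rw [aux_evalOn_eq]; exact hpos y hy)
  obtain ⟨ε, hε, hb⟩ := aux_interior hint
  have hb' : ∀ y ∈ posOrth n, ε * mono y μ₀ ≤ f.evalOn (f.faceAt w) y := fun y hy => by
    rw [← aux_evalOn_eq]
    refine le_trans ?_ (hb y hy)
    refine mul_le_mul_of_nonneg_left ?_ hε.le
    refine Finset.single_le_sum (f := fun μ : f.restSupp (f.faceAt w) => mono y (μ : Fin n → ℝ))
      (fun μ _ => ?_) (Finset.mem_univ (⟨μ₀, by simp [restSupp, hμ₀, hμF]⟩ :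
        f.restSupp (f.faceAt w)))
    rw [aux_mono_exp hy]
    exact (Real.exp_pos _).le
  have hlogt : Filter.Tendsto (fun m => Real.log (t m)) Filter.atTop Filter.atTop :=
    Real.tendsto_log_atTop.comp ht
  have hrest : Filter.Tendsto (fun m => ∑ ν ∈ f.supp, if ν ∈ f.faceAt w then 0 else
      f.coeff ν * (mono (x m) ν / mono (x m) μ₀)) Filter.atTop (nhds 0) := by
    have h0 : (0 : ℝ) = ∑ _ν ∈ f.supp, (0 : ℝ) := Finset.sum_const_zero.symm
    refine Filter.Tendsto.mono_right (tendsto_finsetSum (a := fun _ => (0 : ℝ)) _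
      fun ν hν => ?_) (le_of_eq (congrArg nhds h0.symm))
    split_ifs with hF
    · simp
    · have h1 : (fun m => mono (x m) ν / mono (x m) μ₀) = fun m => Real.exp
          (Real.log (t m) * (dot (fun i => Real.log (x m i) / Real.log (t m)) ν
            - dot (fun i => Real.log (x m i) / Real.log (t m)) μ₀)) := by
        funext m
        have hl : Real.log (t m) ≠ 0 := (Real.log_pos (ht1 m)).ne'
        rw [aux_mono_exp (hxS m).1, aux_mono_exp (hxS m).1, ← Real.exp_sub]
        congr 1
        simp only [dot, mul_sub, Finset.mul_sum]
        congr 1 <;> exact Finset.sum_congr rfl fun i _ => by field_simp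
      have hd : ∀ κ, Filter.Tendsto
          (fun m => dot (fun i => Real.log (x m i) / Real.log (t m)) κ)
          Filter.atTop (nhds (dot w κ)) := fun κ => by
        unfold dot
        exact tendsto_finsetSum _ fun i _ => (tendsto_pi_nhds.mp hlim i).mul_const _
      have h2 : Filter.Tendsto (fun m => mono (x m) ν / mono (x m) μ₀)
          Filter.atTop (nhds 0) := by
        rw [h1]
        exact Real.tendsto_exp_atBot.comp
          (hlogt.atTop_mul_neg (sub_neg.mpr (hlt ν hν hF)) ((hd ν).sub (hd μ₀)))
      simpa using h2.const_mul (f.coeff ν)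
  obtain ⟨m, hm⟩ := (hrest.eventually_const_lt (neg_lt_zero.mpr hε)).exists
  have hM : 0 < mono (x m) μ₀ := by rw [aux_mono_exp (hxS m).1]; exact Real.exp_pos _
  have hsplit : f.eval (x m) = f.evalOn (f.faceAt w) (x m) +
      (∑ ν ∈ f.supp, if ν ∈ f.faceAt w then 0 else
        f.coeff ν * (mono (x m) ν / mono (x m) μ₀)) * mono (x m) μ₀ := by
    unfold eval evalOn
    rw [Finset.sum_mul, ← Finset.sum_add_distrib]
    refine Finset.sum_congr rfl fun ν _ => ?_
    split_ifs
    · simp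
    · field_simp
      simp
  have h3 := hb' _ (hxS m).1
  have h4 := (hxS m).2
  have h5 := mul_lt_mul_of_pos_right hm hM
  linarith

end Signomial

open Signomial in
/-- If `f` satisfies the non-boundary condition (NB) for all faces of
`N(f)`, then `Trop(S(f)) = Σ(f)`. -/
theorem trop_eq_actualNegCone {n : ℕ} (f : Signomial n) (hNB : NBcond f) :
    trop (negSet₁ f) = actualNegCone₁ f := by
  ext w
  exact ⟨aux_subset f hNB, aux_superset f⟩
end

section
/- For each integer m ≥ 2 define h_m : ℝ_{>0} → ℝ by h_m(t) = t² − t^{2 − 2/m} − t + 1. Then h_m(1) = 0 for every m, and the largest positive root of h_m tends to infinity: for every M > 1 there exists m₀ such that for all m ≥ m₀ the function h_m has a root in the interval (M, ∞). In contrast, the limit function h(t) = t² − t² − t + 1 = −t + 1 has t = 1 as its unique positive root. -/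
/-- `h_m(t) = t² − t^{2−2/m} − t + 1` (real powers). -/
noncomputable def hm (m : ℕ) (t : ℝ) : ℝ :=
  t ^ (2 : ℝ) - t ^ ((2 : ℝ) - 2 / (m : ℝ)) - t + 1

/-- `h_m(1) = 0` for every `m ≥ 2`; the largest positive root of `h_m`
tends to infinity, i.e. for every `M > 1` there is `m₀` such that for all `m ≥ m₀` the
function `h_m` has a root in `(M, ∞)`; in contrast, the limit function
`h(t) = −t + 1` has `t = 1` as its unique positive root. -/
theorem roots_escape_to_infinity :
    (∀ m : ℕ, 2 ≤ m → hm m 1 = 0) ∧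
    (∀ M : ℝ, 1 < M → ∃ m₀ : ℕ, ∀ m : ℕ, m₀ ≤ m → ∃ t : ℝ, M < t ∧ hm m t = 0) ∧
    (∀ t : ℝ, 0 < t → (-t + 1 = 0 ↔ t = 1)) := by
  refine ⟨fun m _ => by simp [hm], ?_, fun t _ => by constructor <;> intro h <;> linarith⟩
  intro M hM
  have hM0 : (0 : ℝ) < M := by linarith
  have hlim : Filter.Tendsto (fun m : ℕ => hm m M) Filter.atTop (nhds (-M + 1)) := by
    have h1 : Filter.Tendsto (fun m : ℕ => (2 : ℝ) - 2 / (m : ℝ)) Filter.atTop (nhds (2 - 0)) :=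
      tendsto_const_nhds.sub (tendsto_const_div_atTop_nhds_zero_nat 2)
    have h2 := (tendsto_const_nhds (x := M)).rpow h1 (Or.inl hM0.ne')
    have h3 := ((h2.const_sub (M ^ (2 : ℝ))).sub_const M).add_const 1
    have e : M ^ (2 : ℝ) - M ^ ((2 : ℝ) - 0) - M + 1 = -M + 1 := by
      rw [sub_zero]; ring
    rw [e] at h3
    exact h3
  have hneg : ∀ᶠ m : ℕ in Filter.atTop, hm m M < 0 :=
    hlim.eventually_lt_const (by linarith)
  obtain ⟨m₁, hm₁⟩ := Filter.eventually_atTop.1 hneg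
  refine ⟨max m₁ 2, fun m hmm => ?_⟩
  have hlt := hm₁ m (le_trans (le_max_left _ _) hmm)
  have h2m : 2 ≤ m := le_trans (le_max_right _ _) hmm
  have hm0 : (m : ℝ) ≠ 0 := by positivity
  have hA0 : (0 : ℝ) < 1 + M := by linarith
  have hAT : 1 + M ≤ (1 + M) ^ m := le_self_pow₀ (by linarith) (by omega)
  have hpos : 0 ≤ hm m ((1 + M) ^ m) := by
    have hT0 : (0 : ℝ) < (1 + M) ^ m := by positivity
    have e1 : ((1 + M) ^ m) ^ ((2 : ℝ) / m) = (1 + M) ^ 2 := by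
      rw [← Real.rpow_natCast (1 + M) m, ← Real.rpow_mul hA0.le, mul_div_cancel₀ _ hm0]
      exact Real.rpow_ofNat _ 2
    unfold hm
    rw [Real.rpow_sub hT0, e1, Real.rpow_ofNat]
    generalize (1 + M) ^ m = T at *
    have hd : T ^ 2 / (1 + M) ^ 2 ≤ T ^ 2 / 4 := by
      apply div_le_div_of_nonneg_left <;> nlinarith
    nlinarith
  have hc : ContinuousOn (hm m) (Set.Icc M ((1 + M) ^ m)) := by
    intro x hx
    have hx0 : x ≠ 0 := by linarith [hx.1]
    apply ContinuousAt.continuousWithinAt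
    unfold hm
    exact (((Real.continuousAt_rpow_const x _ (Or.inl hx0)).sub
      (Real.continuousAt_rpow_const x _ (Or.inl hx0))).sub continuousAt_id).add continuousAt_const
  obtain ⟨t, ht, h0⟩ := intermediate_value_Icc (by linarith) hc ⟨hlt.le, hpos⟩
  refine ⟨t, lt_of_le_of_ne ht.1 ?_, h0⟩
  rintro rfl
  linarith
end

section
/- Let f(x₁, x₂) = x₁² − x₁ + 1 − x₂², a signomial on ℝ²_{>0}. Then the vector (0, −1) lies in the negative normal cone N_f^- but does not lie in the real tropicalization Trop(S(f)), where S(f) = f^{-1}(ℝ_{<0}). In particular, Trop(S(f)) ⊊ N_f^-. -/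
open Signomial in
theorem aux_eval (f : Signomial 2)
    (hsupp : f.supp = {![2, 0], ![1, 0], ![0, 0], ![0, 2]})
    (h1 : f.coeff ![2, 0] = 1) (h2 : f.coeff ![1, 0] = -1)
    (h3 : f.coeff ![0, 0] = 1) (h4 : f.coeff ![0, 2] = -1) (x : Fin 2 → ℝ) :
    f.eval x = x 0 ^ 2 - x 0 + 1 - x 1 ^ 2 := by
  unfold eval
  rw [hsupp, Finset.sum_insert, Finset.sum_insert, Finset.sum_insert, Finset.sum_singleton,
    h1, h2, h3, h4]
  · simp [mono, Fin.prod_univ_two]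
    ring
  · intro h
    have := congrFun (Finset.mem_singleton.1 h) 1
    norm_num at this
  · intro h
    simp only [Finset.mem_insert, Finset.mem_singleton] at h
    rcases h with h | h <;> · have := congrFun h 0; norm_num at this
  · intro h
    simp only [Finset.mem_insert, Finset.mem_singleton] at h
    rcases h with h | h | h <;> · have := congrFun h 0; norm_num at this

open Signomial in
theorem aux_face (f : Signomial 2) (v μ : Fin 2 → ℝ) (hμ : μ ∈ f.supp)
    (h : ∀ ν ∈ f.supp, dot v ν ≤ dot v μ) : μ ∈ f.faceAt v := by
  refine ⟨subset_convexHull ℝ _ hμ, ?_⟩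
  have hc : Convex ℝ {ν : Fin 2 → ℝ | dot v ν ≤ dot v μ} := by
    intro a ha b hb s t hs ht hst
    simp only [Set.mem_setOf_eq] at *
    have e : dot v (s • a + t • b) = s * dot v a + t * dot v b := by
      simp [dot, Fin.sum_univ_two]; ring
    rw [e]
    calc s * dot v a + t * dot v b ≤ s * dot v μ + t * dot v μ := by gcongr
      _ = dot v μ := by rw [← add_mul, hst, one_mul]
  intro ν hν
  exact convexHull_min (fun ν hν => h ν hν) hc hν

open Signomial in
theorem aux_trop (f : Signomial 2)
    (hsupp : f.supp = {![2, 0], ![1, 0], ![0, 0], ![0, 2]})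
    (h1 : f.coeff ![2, 0] = 1) (h2 : f.coeff ![1, 0] = -1)
    (h3 : f.coeff ![0, 0] = 1) (h4 : f.coeff ![0, 2] = -1) (w : Fin 2 → ℝ)
    (hw : w ∈ trop (negSet₁ f)) : 0 ≤ w 1 ∧ w 0 ≤ w 1 := by
  obtain ⟨x, t, hx, ht, htt, hl⟩ := hw
  have hl' := tendsto_pi_nhds.1 hl
  have hc : Filter.Tendsto (fun m => Real.log (1/2) / Real.log (t m)) Filter.atTop (nhds 0) :=
    (Real.tendsto_log_atTop.comp htt).const_div_atTop _
  have key : ∀ m, Real.log (1/2) ≤ Real.log (x m 1) ∧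
      Real.log (x m 0) + Real.log (1/2) ≤ Real.log (x m 1) := by
    intro m
    obtain ⟨hp, he⟩ := hx m
    rw [aux_eval f hsupp h1 h2 h3 h4] at he
    have p0 : 0 < x m 0 := hp 0
    have p1 : 0 < x m 1 := hp 1
    refine ⟨Real.log_le_log (by norm_num) ?_, ?_⟩
    · nlinarith [sq_nonneg (x m 0 - 1/2)]
    · rw [← Real.log_mul p0.ne' (by norm_num)]
      refine Real.log_le_log (by positivity) ?_
      apply le_of_lt
      apply lt_of_pow_lt_pow_left₀ 2 p1.le
      nlinarith [sq_nonneg (x m 0 / 2 - 1)]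
  constructor
  · refine le_of_tendsto_of_tendsto' hc (hl' 1) fun m => ?_
    have := Real.log_pos (ht m)
    have := (key m).1
    gcongr
  · have := (hl' 0).add hc
    rw [add_zero] at this
    refine le_of_tendsto_of_tendsto' this (hl' 1) fun m => ?_
    have := Real.log_pos (ht m)
    have := (key m).2
    rw [← add_div]
    gcongr

open Signomial in
/-- For `f = x₁² − x₁ + 1 − x₂²`, the vector `(0, −1)` lies in the negative
normal cone `N_f^-` but not in `Trop(S(f))`; in particular `Trop(S(f)) ⊊ N_f^-`. -/
theorem negCone_strictly_larger_than_trop (f : Signomial 2)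
    (hsupp : f.supp = {![2, 0], ![1, 0], ![0, 0], ![0, 2]})
    (h1 : f.coeff ![2, 0] = 1) (h2 : f.coeff ![1, 0] = -1)
    (h3 : f.coeff ![0, 0] = 1) (h4 : f.coeff ![0, 2] = -1) :
    (![0, -1] : Fin 2 → ℝ) ∈ negCone f ∧
    (![0, -1] : Fin 2 → ℝ) ∉ trop (negSet₁ f) ∧
    trop (negSet₁ f) ⊂ negCone f := by
  have hA : (![0, -1] : Fin 2 → ℝ) ∈ negCone f := by
    refine ⟨![1, 0], by simp [hsupp], by rw [h2]; norm_num, aux_face f _ _ (by simp [hsupp]) ?_⟩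
    intro ν hν
    simp only [hsupp, Finset.mem_insert, Finset.mem_singleton] at hν
    rcases hν with h | h | h | h <;> subst h <;> simp [dot, Fin.sum_univ_two]
  have hB : (![0, -1] : Fin 2 → ℝ) ∉ trop (negSet₁ f) := by
    intro h
    have := (aux_trop f hsupp h1 h2 h3 h4 _ h).1
    norm_num at this
  refine ⟨hA, hB, ?_, fun h => hB (h hA)⟩
  intro w hw
  obtain ⟨ha, hb⟩ := aux_trop f hsupp h1 h2 h3 h4 w hw
  refine ⟨![0, 2], by simp [hsupp], by rw [h4]; norm_num, aux_face f _ _ (by simp [hsupp]) ?_⟩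
  intro ν hν
  simp only [hsupp, Finset.mem_insert, Finset.mem_singleton] at hν
  rcases hν with h | h | h | h <;> subst h <;> simp [dot, Fin.sum_univ_two] <;> linarith
end
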